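/- arXiv:2503.11126 — 2 statements merged into one kernel-verified Lean document; each statement's English description precedes it below -/
import Mathlib

section
/- Let $(M,d)$ be a metric space, $q : M \to [0,\infty)$ a function, $\lambda \in (0,1)$ and $k \ge 2$ an integer. For a finite set $S \subseteq M$ put $Q(S) = \sum_{u \in S} q(u)$, $D(S) = \sum_{(u,v) \in S \times S,\ u \ne v} d(u,v)$ and $F(S) = \lambda\, Q(S) + (1-\lambda)\, D(S)$. For a finite set $T \subseteq M$ with $|T| \ge k$, let $\mathrm{opt}(T \mid k)$ denote a subset of $T$ of cardinality $k$ that maximizes $F$ among all such subsets. Greedy selection of $k$ items from $T$ produces a set $\{z_1,\dots,z_k\}$ of distinct elements of $T$ such that $z_1$ maximizes $q$ over $T$ and, for $i = 2,\dots,k$, $z_i$ maximizes $\lambda\, q(t) + (1-\lambda) \sum_{j<i} d(t,z_j)$ over $t \in T \setminus \{z_1,\dots,z_{i-1}\}$ (ties broken arbitrarily). Let a finite set $U \subseteq M$ be partitioned into disjoint parts $U_1,\dots,U_l$, each of cardinality at least $k$, let $S_i$ be a set produced by greedy selection of $k$ items from $U_i$, and let $O = \mathrm{opt}(U \mid k)$.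 Then $$(1-\lambda)\, D(O) \;\le\; 6\, F\bigl(\mathrm{opt}(S_1 \cup \dots \cup S_l \mid k)\bigr).$$ -/
/-- The sequence `z 0, …, z (k-1)` is a run of greedy selection of `k` items from `T`: the items are
distinct elements of `T`, the first one has maximal quality, and each later one maximizes
`lam * q t + (1 - lam) * ∑ (distances from t to the items chosen before)` among the items of `T`
that have not been chosen before. Ties may be broken arbitrarily. -/
def IsGreedySel {M : Type*} [MetricSpace M] (q : M → ℝ) (lam : ℝ)
    (T : Finset M) (k : ℕ) (z : Fin k → M) : Prop :=
  Function.Injective z ∧ (∀ i, z i ∈ T) ∧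
  (∀ hk : 0 < k, ∀ t ∈ T, q t ≤ q (z ⟨0, hk⟩)) ∧
  ∀ i : Fin k, 0 < (i : ℕ) → ∀ t ∈ T, (∀ j : Fin k, j < i → t ≠ z j) →
    lam * q t + (1 - lam) * ∑ j ∈ Finset.univ.filter (fun j => j < i), dist t (z j) ≤
      lam * q (z i) + (1 - lam) * ∑ j ∈ Finset.univ.filter (fun j => j < i), dist (z i) (z j)

/-- Total quality of `S`. -/
noncomputable def Qsum {M : Type*} (q : M → ℝ) (S : Finset M) : ℝ := ∑ u ∈ S, q u

/-- Sum of the distances over ordered pairs of distinct elements of `S`. -/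
noncomputable def Dsum {M : Type*} [MetricSpace M] [DecidableEq M] (S : Finset M) : ℝ :=
  ∑ p ∈ S.offDiag, dist p.1 p.2

/-- The objective function. -/
noncomputable def Fobj {M : Type*} [MetricSpace M] [DecidableEq M]
    (q : M → ℝ) (lam : ℝ) (S : Finset M) : ℝ :=
  lam * Qsum q S + (1 - lam) * Dsum S

/-- `O` maximizes the objective among the subsets of `T` of cardinality `k`. -/
def IsOptSubset {M : Type*} [MetricSpace M] [DecidableEq M] (q : M → ℝ) (lam : ℝ)
    (T : Finset M) (k : ℕ) (O : Finset M) : Prop :=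
  O ⊆ T ∧ O.card = k ∧ ∀ B ⊆ T, B.card = k → Fobj q lam B ≤ Fobj q lam O

/-- Sum of the distances between the points of `X` and the points of `Y`. -/
noncomputable def crossDist {M : Type*} [MetricSpace M] (X Y : Finset M) : ℝ :=
  ∑ x ∈ X, ∑ y ∈ Y, dist x y

section CrossDist

variable {M : Type*} [MetricSpace M]

lemma crossDist_nonneg (X Y : Finset M) : 0 ≤ crossDist X Y :=
  Finset.sum_nonneg fun _ _ => Finset.sum_nonneg fun _ _ => dist_nonneg

lemma crossDist_comm (X Y : Finset M) : crossDist X Y = crossDist Y X := by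
  unfold crossDist
  rw [Finset.sum_comm]
  simp only [dist_comm]

lemma crossDist_self_le_sum_dist (I : Finset M) (y : M) :
    crossDist I I ≤ 2 * I.card * ∑ u ∈ I, dist y u := by
  calc crossDist I I ≤ ∑ u ∈ I, ∑ v ∈ I, (dist y u + dist y v) :=
        Finset.sum_le_sum fun u _ => Finset.sum_le_sum fun v _ => by
          simpa [dist_comm y u] using dist_triangle u y v
    _ = 2 * I.card * ∑ u ∈ I, dist y u := by
        simp only [Finset.sum_add_distrib, Finset.sum_const, nsmul_eq_mul, ← Finset.mul_sum]
        ring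

lemma crossDist_self_le_two_mul {I Y : Finset M} (h : Y.card = I.card) :
    crossDist I I ≤ 2 * crossDist Y I := by
  rcases I.eq_empty_or_nonempty with rfl | hI
  · simp [crossDist]
  have hpos : (0 : ℝ) < I.card := by exact_mod_cast hI.card_pos
  have hsum : ∑ _y ∈ Y, crossDist I I ≤ ∑ y ∈ Y, 2 * I.card * ∑ u ∈ I, dist y u :=
    Finset.sum_le_sum fun y _ => crossDist_self_le_sum_dist I y
  rw [Finset.sum_const, nsmul_eq_mul, h, ← Finset.mul_sum] at hsum
  change _ ≤ 2 * (I.card : ℝ) * crossDist Y I at hsum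
  nlinarith

variable [DecidableEq M]

lemma crossDist_union_left {X Y : Finset M} (h : Disjoint X Y) (Z : Finset M) :
    crossDist (X ∪ Y) Z = crossDist X Z + crossDist Y Z :=
  Finset.sum_union h

lemma crossDist_union_right {X Y : Finset M} (h : Disjoint X Y) (Z : Finset M) :
    crossDist Z (X ∪ Y) = crossDist Z X + crossDist Z Y := by
  rw [crossDist_comm, crossDist_union_left h, crossDist_comm X, crossDist_comm Y]

lemma Dsum_eq_crossDist (S : Finset M) : Dsum S = crossDist S S := by
  unfold Dsum crossDist
  rw [← Finset.sum_product', ← Finset.diag_union_offDiag,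
    Finset.sum_union (Finset.disjoint_diag_offDiag S)]
  simp

/-- The dispersion of a multiset `A + B` of `k` points of `W` is at most twice that of some
`k`-subset of `W`. -/
lemma exists_card_eq_dispersion_le {A B W : Finset M} {k : ℕ} (hA : A ⊆ W) (hB : B ⊆ W)
    (hAB : A.card + B.card = k) (hk : k ≤ W.card) :
    ∃ T ⊆ W, T.card = k ∧
      crossDist A A + 2 * crossDist A B + crossDist B B ≤ 2 * crossDist T T := by
  have hN : (A ∪ B).card + (A ∩ B).card = k := by rw [Finset.card_union_add_card_inter, hAB]
  have hNW : A ∪ B ⊆ W := Finset.union_subset hA hB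
  obtain ⟨Y, hYW, hY⟩ : ∃ Y ⊆ W \ (A ∪ B), Y.card = (A ∩ B).card := by
    apply Finset.exists_subset_card_eq
    rw [Finset.card_sdiff_of_subset hNW]
    omega
  have hdY : Disjoint (A ∪ B) Y := Finset.disjoint_of_subset_right hYW Finset.disjoint_sdiff
  refine ⟨A ∪ B ∪ Y, Finset.union_subset hNW (hYW.trans Finset.sdiff_subset), ?_, ?_⟩
  · rw [Finset.card_union_of_disjoint hdY, hY, hN]
  have hI := crossDist_self_le_two_mul hY
  have hd1 : Disjoint (A ∩ B) (A \ B) := by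
    rw [Finset.disjoint_left]; intro x; simp; tauto
  have hd2 : Disjoint (A ∩ B) (B \ A) := by
    rw [Finset.disjoint_left]; intro x; simp; tauto
  have hd3 : Disjoint (A ∩ B ∪ A \ B) (B \ A) := by
    rw [Finset.disjoint_left]; intro x; simp; tauto
  have eA : A = A ∩ B ∪ A \ B := by ext x; simp; tauto
  have eB : B = A ∩ B ∪ B \ A := by ext x; simp; tauto
  have eN : A ∪ B = A ∩ B ∪ A \ B ∪ B \ A := by ext x; simp; tauto
  rw [eN] at hdY ⊢
  generalize A ∩ B = I at *
  generalize A \ B = P at *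
  generalize B \ A = R at *
  subst eA eB
  simp only [crossDist_union_left hdY, crossDist_union_right hdY, crossDist_union_left hd1,
    crossDist_union_right hd1, crossDist_union_left hd2, crossDist_union_right hd2,
    crossDist_union_left hd3, crossDist_union_right hd3]
  rw [crossDist_comm P I, crossDist_comm R I, crossDist_comm R P, crossDist_comm I Y,
    crossDist_comm P Y, crossDist_comm R Y]
  linarith [crossDist_nonneg Y P, crossDist_nonneg Y R, crossDist_nonneg Y Y,
    crossDist_nonneg P P, crossDist_nonneg R R, crossDist_nonneg P R]

end CrossDist

lemma Fin.sum_sum_eq_sum_lt_add {k : ℕ} (f : Fin k → Fin k → ℝ) :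
    ∑ i, ∑ j, f i j =
      (∑ i, ∑ j ∈ Finset.univ.filter (fun j => j < i), f i j) +
      (∑ i, ∑ j ∈ Finset.univ.filter (fun j => j < i), f j i) + ∑ i, f i i := by
  have hswap : (∑ i, ∑ j ∈ Finset.univ.filter (fun j => j < i), f j i) =
      ∑ i, ∑ j ∈ Finset.univ.filter (fun j => i < j), f i j := by
    simp only [Finset.sum_filter]
    rw [Finset.sum_comm]
  rw [hswap, ← Finset.sum_add_distrib, ← Finset.sum_add_distrib]
  refine Finset.sum_congr rfl fun i _ => ?_
  have hdiag : f i i = ∑ j, if j = i then f i j else 0 := by simp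
  rw [hdiag, Finset.sum_filter, Finset.sum_filter, ← Finset.sum_add_distrib,
    ← Finset.sum_add_distrib]
  refine Finset.sum_congr rfl fun j _ => ?_
  rcases lt_trichotomy j i with h | h | h
  · simp [h, h.ne, h.not_gt]
  · simp [h]
  · simp [h, h.ne', h.not_gt]

/-- An item not selected by greedy selection is close, on average, to the selected items. -/
lemma IsGreedySel.sum_dist_le {M : Type*} [MetricSpace M] [DecidableEq M] {q : M → ℝ}
    (hq : ∀ u, 0 ≤ q u) {lam : ℝ} (hlam0 : 0 ≤ lam) (hlam1 : lam ≤ 1) {T : Finset M} {k : ℕ}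
    {z : Fin k → M} (hz : IsGreedySel q lam T k z) {t : M} (ht : t ∈ T) (htz : ∀ j, t ≠ z j) :
    (1 - lam) * (((k : ℝ) - 1) * ∑ j, dist t (z j)) ≤
      2 * Fobj q lam (Finset.univ.image z) := by
  obtain ⟨hinj, -, -, hstep⟩ := hz
  have hgain : ∀ i : Fin k,
      (1 - lam) * ∑ j ∈ Finset.univ.filter (fun j => j < i), dist t (z j) ≤
      lam * q (z i) + (1 - lam) * ∑ j ∈ Finset.univ.filter (fun j => j < i),
        dist (z i) (z j) := by
    intro i
    have hqt : 0 ≤ lam * q t := mul_nonneg hlam0 (hq t)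
    rcases Nat.eq_zero_or_pos (i : ℕ) with h0 | h0
    · have hemp : Finset.univ.filter (fun j : Fin k => j < i) = ∅ := by
        ext j; simp [Fin.le_def, h0]
      rw [hemp]
      simpa using mul_nonneg hlam0 (hq (z i))
    · linarith [hstep i h0 t ht fun j _ => htz j]
  have hsum := Finset.sum_le_sum fun i (_ : i ∈ Finset.univ) => hgain i
  rw [Finset.sum_add_distrib, ← Finset.mul_sum, ← Finset.mul_sum, ← Finset.mul_sum] at hsum
  have hQ : Qsum q (Finset.univ.image z) = ∑ i, q (z i) := Finset.sum_image hinj.injOn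
  have hD : Dsum (Finset.univ.image z) =
      2 * ∑ i, ∑ j ∈ Finset.univ.filter (fun j => j < i), dist (z i) (z j) := by
    rw [Dsum_eq_crossDist, crossDist, Finset.sum_image hinj.injOn]
    simp only [Finset.sum_image hinj.injOn]
    rw [Fin.sum_sum_eq_sum_lt_add]
    simp only [dist_self, Finset.sum_const_zero]
    have h2 : (∑ i, ∑ j ∈ Finset.univ.filter (fun j => j < i), dist (z j) (z i)) =
        ∑ i, ∑ j ∈ Finset.univ.filter (fun j => j < i), dist (z i) (z j) :=
      Finset.sum_congr rfl fun i _ => Finset.sum_congr rfl fun j _ => dist_comm _ _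
    linarith
  have htri : (∑ i, ∑ j ∈ Finset.univ.filter (fun j => j < i), dist t (z i)) ≤
      (∑ i, ∑ j ∈ Finset.univ.filter (fun j => j < i), dist t (z j)) +
        ∑ i, ∑ j ∈ Finset.univ.filter (fun j => j < i), dist (z i) (z j) := by
    simp only [← Finset.sum_add_distrib]
    refine Finset.sum_le_sum fun i _ => Finset.sum_le_sum fun j _ => ?_
    rw [dist_comm (z i)]
    exact dist_triangle _ _ _
  have htot := Fin.sum_sum_eq_sum_lt_add fun i _ : Fin k => dist t (z i)
  simp only [Finset.sum_const, Finset.card_univ, Fintype.card_fin, nsmul_eq_mul,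
    ← Finset.mul_sum] at htot
  simp only [Finset.sum_const, nsmul_eq_mul] at htri
  have hP : 0 ≤ ∑ i, ∑ j ∈ Finset.univ.filter (fun j => j < i), dist (z i) (z j) :=
    Finset.sum_nonneg fun _ _ => Finset.sum_nonneg fun _ _ => dist_nonneg
  rw [Fobj, hQ, hD]
  have hmu : 0 ≤ 1 - lam := by linarith
  have hle := mul_le_mul_of_nonneg_left (show ((k : ℝ) - 1) * ∑ j, dist t (z j) ≤
    2 * (∑ i, ∑ j ∈ Finset.univ.filter (fun j => j < i), dist t (z j)) +
      ∑ i, ∑ j ∈ Finset.univ.filter (fun j => j < i), dist (z i) (z j) by linarith) hmu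
  linarith [mul_nonneg hmu hP]

/-- Some cyclic shift of an assignment costs at most the average. -/
lemma exists_shift_sum_le {α : Type*} {k : ℕ} [NeZero k] (B : Finset α) (e : α → Fin k)
    (w : α → Fin k → ℝ) :
    ∃ c : Fin k, (k : ℝ) * ∑ o ∈ B, w o (e o + c) ≤ ∑ o ∈ B, ∑ j, w o j := by
  have havg : ∑ c : Fin k, ∑ o ∈ B, w o (e o + c) = ∑ o ∈ B, ∑ j, w o j := by
    rw [Finset.sum_comm]
    exact Finset.sum_congr rfl fun o _ => Equiv.sum_comp (Equiv.addLeft (e o)) (w o)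
  obtain ⟨c, -, hc⟩ := Finset.exists_le_of_sum_le
    (s := (Finset.univ : Finset (Fin k))) Finset.univ_nonempty
    (f := fun c => (k : ℝ) * ∑ o ∈ B, w o (e o + c))
    (g := fun _ => ∑ o ∈ B, ∑ j, w o j)
    (by rw [← Finset.mul_sum, havg]; simp)
  exact ⟨c, hc⟩

lemma crossDist_self_le_of_map {M : Type*} [MetricSpace M] [DecidableEq M] (O : Finset M)
    (s : M → M) :
    crossDist O O ≤ 2 * ((O.card : ℝ) - 1) * ∑ o ∈ O, dist o (s o) +
      ∑ o ∈ O, ∑ p ∈ O, dist (s o) (s p) := by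
  have hpair : ∀ o ∈ O, ∀ p ∈ O, dist o p ≤ dist o (s o) + dist p (s p) + dist (s o) (s p) -
      if o = p then 2 * dist o (s o) else 0 := by
    intro o _ p _
    split_ifs with h
    · subst h; simp; linarith
    · have := dist_triangle4 o (s o) (s p) p
      rw [dist_comm (s p) p] at this
      linarith
  refine (Finset.sum_le_sum fun o ho => Finset.sum_le_sum fun p hp => hpair o ho p hp).trans ?_
  have hdiag : ∑ o ∈ O, ∑ p ∈ O, (if o = p then 2 * dist o (s o) else 0) =
      2 * ∑ o ∈ O, dist o (s o) := by
    rw [Finset.mul_sum]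
    refine Finset.sum_congr rfl fun o ho => ?_
    rw [Finset.sum_ite_eq, if_pos ho]
  simp only [Finset.sum_sub_distrib, Finset.sum_add_distrib, Finset.sum_const, nsmul_eq_mul,
    hdiag, ← Finset.mul_sum]
  linarith

theorem stmt_5 {M : Type*} [MetricSpace M] [DecidableEq M]
    (q : M → ℝ) (hq : ∀ u, 0 ≤ q u)
    (lam : ℝ) (hlam0 : 0 < lam) (hlam1 : lam < 1)
    (k l : ℕ) (hk : 2 ≤ k)
    (Upart : Fin l → Finset M)
    (hdisj : ∀ i j, i ≠ j → Disjoint (Upart i) (Upart j))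
    (hcard : ∀ i, k ≤ (Upart i).card)
    (U : Finset M) (hU : U = Finset.univ.biUnion Upart)
    (z : Fin l → Fin k → M)
    (hz : ∀ i, IsGreedySel q lam (Upart i) k (z i))
    (S : Fin l → Finset M) (hS : ∀ i, S i = Finset.univ.image (z i))
    (O : Finset M) (hO : IsOptSubset q lam U k O)
    (OptS : Finset M) (hOptS : IsOptSubset q lam (Finset.univ.biUnion S) k OptS) :
    (1 - lam) * Dsum O ≤ 6 * Fobj q lam OptS := by
  obtain ⟨hOU, hOcard, -⟩ := hO
  obtain ⟨hOptW, hOptcard, hmax⟩ := hOptS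
  have : NeZero k := ⟨by omega⟩
  have hmu : 0 < 1 - lam := by linarith
  set W := Finset.univ.biUnion S with hW
  have hzW : ∀ i j, z i j ∈ W := fun i j => by
    rw [hW, Finset.mem_biUnion]
    exact ⟨i, Finset.mem_univ i, by simp [hS]⟩
  have hSopt : ∀ i, Fobj q lam (Finset.univ.image (z i)) ≤ Fobj q lam OptS := fun i => by
    refine hmax _ (Finset.image_subset_iff.2 fun j _ => hzW i j) ?_
    rw [Finset.card_image_of_injective _ (hz i).1, Finset.card_univ, Fintype.card_fin]
  have hpart : ∀ o : M, ∃ i, o ∈ O → o ∈ Upart i := by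
    intro o
    by_cases ho : o ∈ O
    · have := hOU ho
      rw [hU, Finset.mem_biUnion] at this
      obtain ⟨i, -, hi⟩ := this
      exact ⟨i, fun _ => hi⟩
    · obtain ⟨x, hx⟩ : OptS.Nonempty := Finset.card_pos.1 (by omega)
      have := hOptW hx
      rw [hW, Finset.mem_biUnion] at this
      obtain ⟨i, -, -⟩ := this
      exact ⟨i, fun h => absurd h ho⟩
  choose part hpart using hpart
  obtain ⟨e, he⟩ : ∃ e : M → Fin k, Set.InjOn e O := by
    let f := O.equivFinOfCardEq hOcard
    refine ⟨fun o => if h : o ∈ O then f ⟨o, h⟩ else 0, fun a ha b hb hab => ?_⟩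
    have ha' : a ∈ O := ha
    have hb' : b ∈ O := hb
    simp only [ha', hb', dif_pos] at hab
    exact congrArg Subtype.val (f.injective hab)
  obtain ⟨c, hc⟩ := exists_shift_sum_le (O \ W) e fun o j => dist o (z (part o) j)
  let g : M → M := fun o => z (part o) (e o + c)
  have hginj : Set.InjOn g (O \ W : Finset M) := by
    intro a ha b hb hab
    have haO : a ∈ O := (Finset.mem_sdiff.1 ha).1
    have hbO : b ∈ O := (Finset.mem_sdiff.1 hb).1
    have hpp : part a = part b := by
      by_contra hne
      refine Finset.disjoint_left.1 (hdisj _ _ hne) ((hz (part a)).2.1 (e a + c)) ?_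
      have hab' : z (part a) (e a + c) = z (part b) (e b + c) := hab
      rw [hab']
      exact (hz (part b)).2.1 _
    have hab' : z (part a) (e a + c) = z (part b) (e b + c) := hab
    rw [hpp] at hab'
    exact he haO hbO (add_right_cancel ((hz _).1 hab'))
  have hcost : (1 - lam) * (((k : ℝ) - 1) * ∑ o ∈ O \ W, dist o (g o)) ≤
      2 * Fobj q lam OptS := by
    have hkR : (2 : ℝ) ≤ k := by exact_mod_cast hk
    have hF : 0 ≤ Fobj q lam OptS := by
      refine add_nonneg (mul_nonneg hlam0.le (Finset.sum_nonneg fun u _ => hq u))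
        (mul_nonneg hmu.le (Finset.sum_nonneg fun _ _ => dist_nonneg))
    have hsum : ∑ o ∈ O \ W, (1 - lam) * (((k : ℝ) - 1) * ∑ j, dist o (z (part o) j)) ≤
        ∑ _o ∈ O \ W, 2 * Fobj q lam OptS := by
      refine Finset.sum_le_sum fun o ho => ?_
      rw [Finset.mem_sdiff] at ho
      refine ((hz (part o)).sum_dist_le hq hlam0.le hlam1.le (hpart o ho.1) ?_).trans
        (by linarith [hSopt (part o)])
      intro j hj
      exact ho.2 (hj ▸ hzW (part o) j)
    rw [← Finset.mul_sum, ← Finset.mul_sum, Finset.sum_const, nsmul_eq_mul] at hsum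
    have hBk : ((O \ W).card : ℝ) ≤ k := by
      exact_mod_cast hOcard ▸ Finset.card_le_card Finset.sdiff_subset
    have h1 := mul_le_mul_of_nonneg_left hc
      (mul_nonneg hmu.le (by linarith : (0 : ℝ) ≤ (k : ℝ) - 1))
    have h2 := mul_le_mul_of_nonneg_right hBk (by linarith : 0 ≤ 2 * Fobj q lam OptS)
    refine le_of_mul_le_mul_left ?_ (by linarith : (0 : ℝ) < k)
    change _ * ((k : ℝ) * ∑ o ∈ O \ W, dist o (g o)) ≤ _ at h1
    linarith
  let s : M → M := fun o => if o ∈ W then o else g o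
  have hsplit : O = O ∩ W ∪ O \ W := by ext x; simp; tauto
  have hdO : Disjoint (O ∩ W) (O \ W) := by
    rw [Finset.disjoint_left]; intro x; simp; tauto
  have hsum_split : ∀ h : M → ℝ,
      ∑ o ∈ O, h (s o) = ∑ x ∈ O ∩ W, h x + ∑ x ∈ (O \ W).image g, h x := by
    intro h
    rw [Finset.sum_image hginj]
    conv_lhs => rw [hsplit]
    rw [Finset.sum_union hdO]
    congr 1
    · exact Finset.sum_congr rfl fun o ho => by simp [s, (Finset.mem_inter.1 ho).2]
    · exact Finset.sum_congr rfl fun o ho => by simp [s, (Finset.mem_sdiff.1 ho).2]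
  have hmove : ∑ o ∈ O, dist o (s o) = ∑ o ∈ O \ W, dist o (g o) := by
    conv_lhs => rw [hsplit]
    rw [Finset.sum_union hdO, Finset.sum_eq_zero, zero_add]
    · exact Finset.sum_congr rfl fun o ho => by simp [s, (Finset.mem_sdiff.1 ho).2]
    · intro o ho
      simp [s, (Finset.mem_inter.1 ho).2]
  obtain ⟨T, hTW, hTcard, hT⟩ := exists_card_eq_dispersion_le (A := O ∩ W)
    (B := (O \ W).image g) (W := W) (k := k) Finset.inter_subset_right
    (Finset.image_subset_iff.2 fun o _ => hzW _ _)
    (by rw [Finset.card_image_of_injOn hginj, ← Finset.card_union_of_disjoint hdO, ← hsplit,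
          hOcard])
    (hOptcard ▸ Finset.card_le_card hOptW)
  have himage : ∑ o ∈ O, ∑ p ∈ O, dist (s o) (s p) ≤ 2 * crossDist T T := by
    refine le_trans (le_of_eq ?_) hT
    rw [hsum_split fun x => ∑ p ∈ O, dist x (s p)]
    have hinner : ∀ x, ∑ p ∈ O, dist x (s p) =
        ∑ y ∈ O ∩ W, dist x y + ∑ y ∈ (O \ W).image g, dist x y := fun x => hsum_split (dist x)
    simp only [hinner, Finset.sum_add_distrib]
    change crossDist _ _ + crossDist _ _ + (crossDist _ _ + crossDist _ _) = _
    rw [crossDist_comm ((O \ W).image g) (O ∩ W)]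
    ring
  have hTopt : (1 - lam) * crossDist T T ≤ Fobj q lam OptS := by
    refine le_trans ?_ (hmax T hTW hTcard)
    rw [Fobj, Dsum_eq_crossDist]
    have hQ : 0 ≤ Qsum q T := Finset.sum_nonneg fun u _ => hq u
    linarith [mul_nonneg hlam0.le hQ]
  have hmain := crossDist_self_le_of_map O s
  rw [hmove, hOcard] at hmain
  rw [Dsum_eq_crossDist]
  have := mul_le_mul_of_nonneg_left (hmain.trans (add_le_add_right himage _)) hmu.le
  linarith
end

section
/- Let $(M,d)$ be a metric space, let $q : M \to [0,\infty)$, let $\lambda \in (0,1)$ and let $k \ge 1$ be an integer. For a finite set $S \subseteq M$ put $Q(S) = \sum_{u \in S} q(u)$, $D(S) = \sum_{(u,v) \in S \times S,\ u \ne v} d(u,v)$ (sum over ordered pairs) and $F(S) = \lambda\, Q(S) + (1-\lambda)\, D(S)$. For a finite $T \subseteq M$ with $|T| \ge k$, let $\mathrm{opt}(T \mid k)$ denote a subset of $T$ of cardinality $k$ maximizing $F$ among all such subsets. A greedy selection of $k$ items from $T$ is a set $\{z_1,\dots,z_k\}$ of distinct elements of $T$ such that $z_1$ maximizes $q$ over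 $T$ and, for $i = 2,\dots,k$, $z_i$ maximizes $\lambda\, q(t) + (1-\lambda)\sum_{j<i} d(t,z_j)$ over $t \in T \setminus \{z_1,\dots,z_{i-1}\}$. Let a finite set $U \subseteq M$ be partitioned into disjoint parts $U_1,\dots,U_l$, each of cardinality at least $k$. For each $i$ let $S_i$ be a greedy selection of $k$ items from $U_i$, and let $O = \mathrm{opt}(U \mid k)$. Then $$\lambda\, Q(O) \;\le\; 2\, F\bigl(\mathrm{opt}(S_1 \cup \dots \cup S_l \mid k)\bigr).$$ -/
/-- `z 0, …, z (k - 1)` is a run of greedy selection of `k` items from `T`: the first item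
maximizes `q` over `T`; every later item maximizes
`lam * q t + (1 - lam) * ∑ j < i, dist t (z j)` over the items `t` not selected so far. -/
def IsGreedyRun {M : Type*} [MetricSpace M] (q : M → ℝ) (lam : ℝ)
    (T : Finset M) (k : ℕ) (z : Fin k → M) : Prop :=
  Function.Injective z ∧ (∀ i, z i ∈ T) ∧
  (∀ i : Fin k, i.val = 0 → ∀ t ∈ T, q t ≤ q (z i)) ∧
  ∀ i : Fin k, 0 < i.val → ∀ t ∈ T, (∀ j < i, t ≠ z j) →
    lam * q t + (1 - lam) * ∑ j ∈ Finset.univ.filter (fun j => j < i), dist t (z j) ≤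
      lam * q (z i) + (1 - lam) * ∑ j ∈ Finset.univ.filter (fun j => j < i), dist (z i) (z j)

/-- `S` is a possible output of greedy selection of `k` items from `T`
(ties may be broken arbitrarily). -/
def IsGreedySelection {M : Type*} [MetricSpace M] [DecidableEq M] (q : M → ℝ) (lam : ℝ)
    (T : Finset M) (k : ℕ) (S : Finset M) : Prop :=
  ∃ z : Fin k → M, IsGreedyRun q lam T k z ∧ S = Finset.univ.image z

/-- The objective as a sum of contributions of the individual items. -/
theorem Fobj_eq_sum {M : Type*} [MetricSpace M] [DecidableEq M] (q : M → ℝ) (lam : ℝ)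
    (B : Finset M) :
    Fobj q lam B = ∑ u ∈ B, (lam * q u + (1 - lam) * ∑ v ∈ B, dist u v) := by
  have hD : Dsum B = ∑ u ∈ B, ∑ v ∈ B, dist u v := by
    rw [← Finset.sum_product', ← Finset.diag_union_offDiag,
      Finset.sum_union (Finset.disjoint_diag_offDiag B), Dsum]
    simp [Finset.sum_diag]
  rw [Fobj, hD, Qsum, Finset.sum_add_distrib, Finset.mul_sum, Finset.mul_sum]

theorem Fobj_nonneg {M : Type*} [MetricSpace M] [DecidableEq M] {q : M → ℝ}
    (hq : ∀ u, 0 ≤ q u) {lam : ℝ} (h0 : 0 ≤ lam) (h1 : lam ≤ 1) (B : Finset M) :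
    0 ≤ Fobj q lam B := by
  have h1' : 0 ≤ 1 - lam := sub_nonneg.2 h1
  exact add_nonneg (mul_nonneg h0 (Finset.sum_nonneg fun u _ => hq u))
    (mul_nonneg h1' (Finset.sum_nonneg fun _ _ => dist_nonneg))

/-- The objective is superadditive over disjoint unions. -/
theorem sum_Fobj_le_Fobj_biUnion {M ι : Type*} [MetricSpace M] [DecidableEq M]
    (q : M → ℝ) {lam : ℝ} (h1 : lam ≤ 1) (s : Finset ι) (B : ι → Finset M)
    (hB : (s : Set ι).PairwiseDisjoint B) :
    ∑ i ∈ s, Fobj q lam (B i) ≤ Fobj q lam (s.biUnion B) := by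
  have h1' : 0 ≤ 1 - lam := sub_nonneg.2 h1
  rw [Fobj_eq_sum, Finset.sum_biUnion hB]
  refine Finset.sum_le_sum fun i hi => ?_
  rw [Fobj_eq_sum]
  gcongr with u hu
  exact Finset.subset_biUnion_of_mem B hi

/-- If every element of `s` is dominated by every element of `t` and the two sets have the same
size, then so are the sums. -/
theorem Finset.sum_le_sum_of_card_eq_of_forall_le {α β : Type*} {s : Finset α} {t : Finset β}
    {f : α → ℝ} {g : β → ℝ} (hcard : s.card = t.card) (h : ∀ a ∈ s, ∀ b ∈ t, f a ≤ g b) :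
    ∑ a ∈ s, f a ≤ ∑ b ∈ t, g b := by
  rw [← Finset.sum_coe_sort s, ← Finset.sum_coe_sort t,
    ← (Finset.equivOfCardEq hcard).sum_comp fun b : t => g b]
  exact Finset.sum_le_sum fun a _ => h _ a.2 _ (Subtype.prop _)

/-- If every item of `A` outside `B` has quality at most the contribution of each item of `B`,
then the quality of `A` is at most the objective of `B`. -/
theorem mul_Qsum_le_Fobj {M : Type*} [MetricSpace M] [DecidableEq M] (q : M → ℝ)
    {lam : ℝ} (h1 : lam ≤ 1) {A B : Finset M} (hcard : A.card = B.card)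
    (h : ∀ t ∈ A \ B, ∀ u ∈ B, lam * q t ≤ lam * q u + (1 - lam) * ∑ v ∈ B, dist u v) :
    lam * Qsum q A ≤ Fobj q lam B := by
  have h1' : 0 ≤ 1 - lam := sub_nonneg.2 h1
  rw [Fobj_eq_sum, Qsum, Finset.mul_sum, ← Finset.sum_inter_add_sum_sdiff A B,
    ← Finset.sum_inter_add_sum_sdiff B A, Finset.inter_comm B A]
  refine add_le_add (Finset.sum_le_sum fun u _ => ?_)
    (Finset.sum_le_sum_of_card_eq_of_forall_le (Finset.card_sdiff_comm hcard)
      fun t ht u hu => h t ht u (Finset.sdiff_subset hu))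
  exact le_add_of_nonneg_right (mul_nonneg h1' (Finset.sum_nonneg fun _ _ => dist_nonneg))

/-- The first `m` items of a run of greedy selection. -/
def runPrefix {M : Type*} [DecidableEq M] {k : ℕ} (z : Fin k → M) (m : ℕ) : Finset M :=
  (Finset.univ.filter fun i : Fin k => i.val < m).image z

theorem card_runPrefix {M : Type*} [DecidableEq M] {k : ℕ} {z : Fin k → M}
    (hz : Function.Injective z) {m : ℕ} (hm : m ≤ k) : (runPrefix z m).card = m := by
  rw [runPrefix, Finset.card_image_of_injective _ hz, Fin.card_filter_val_lt, min_eq_right hm]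

/-- The first `|A|` items of a greedy run on `T` have objective at least the weighted quality of
`A ⊆ T`. -/
theorem IsGreedyRun.mul_Qsum_le_Fobj_runPrefix {M : Type*} [MetricSpace M] [DecidableEq M]
    {q : M → ℝ} {lam : ℝ} (h0 : 0 ≤ lam) (h1 : lam ≤ 1) {T : Finset M} {k : ℕ} {z : Fin k → M}
    (hz : IsGreedyRun q lam T k z) {A : Finset M} (hAT : A ⊆ T) (hA : A.card ≤ k) :
    lam * Qsum q A ≤ Fobj q lam (runPrefix z A.card) := by
  have h1' : 0 ≤ 1 - lam := sub_nonneg.2 h1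
  obtain ⟨hinj, -, hfirst, hstep⟩ := hz
  refine mul_Qsum_le_Fobj q h1 (card_runPrefix hinj hA).symm fun t ht u hu => ?_
  obtain ⟨htA, htP⟩ := Finset.mem_sdiff.1 ht
  obtain ⟨i, hi, rfl⟩ := Finset.mem_image.1 hu
  have hi' : i.val < A.card := (Finset.mem_filter.1 hi).2
  rcases Nat.eq_zero_or_pos i.val with h | h
  · exact le_add_of_le_of_nonneg (mul_le_mul_of_nonneg_left (hfirst i h t (hAT htA)) h0)
      (mul_nonneg h1' (Finset.sum_nonneg fun _ _ => dist_nonneg))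
  · have hne : ∀ j < i, t ≠ z j := by
      rintro j hj rfl
      exact htP (Finset.mem_image_of_mem z
        (Finset.mem_filter.2 ⟨Finset.mem_univ j, lt_trans (Fin.lt_def.1 hj) hi'⟩))
    have hsum : ∑ j ∈ Finset.univ.filter (fun j => j < i), dist (z i) (z j) ≤
        ∑ v ∈ runPrefix z A.card, dist (z i) v := by
      rw [runPrefix, Finset.sum_image hinj.injOn]
      refine Finset.sum_le_sum_of_subset_of_nonneg (fun j hj => ?_) fun _ _ _ => dist_nonneg
      exact Finset.mem_filter.2 ⟨Finset.mem_univ j,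
        lt_trans (Fin.lt_def.1 (Finset.mem_filter.1 hj).2) hi'⟩
    calc lam * q t
        ≤ lam * q t + (1 - lam) * ∑ j ∈ Finset.univ.filter (fun j => j < i), dist t (z j) :=
          le_add_of_nonneg_right (mul_nonneg h1' (Finset.sum_nonneg fun _ _ => dist_nonneg))
      _ ≤ lam * q (z i) +
          (1 - lam) * ∑ j ∈ Finset.univ.filter (fun j => j < i), dist (z i) (z j) :=
          hstep i h t (hAT htA) hne
      _ ≤ _ := by gcongr

theorem stmt_6 {M : Type*} [MetricSpace M] [DecidableEq M]
    (q : M → ℝ) (hq : ∀ u, 0 ≤ q u)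
    (lam : ℝ) (hlam0 : 0 < lam) (hlam1 : lam < 1)
    (k l : ℕ) (hk : 1 ≤ k)
    (U : Finset M) (Upart : Fin l → Finset M)
    (hU : U = Finset.univ.biUnion Upart)
    (hdisj : ∀ i j, i ≠ j → Disjoint (Upart i) (Upart j))
    (hcard : ∀ i, k ≤ (Upart i).card)
    (S : Fin l → Finset M)
    (hS : ∀ i, IsGreedySelection q lam (Upart i) k (S i))
    (O : Finset M) (hO : IsOptSubset q lam U k O)
    (P : Finset M) (hP : IsOptSubset q lam (Finset.univ.biUnion S) k P) :
    lam * Qsum q O ≤ 2 * Fobj q lam P := by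
  obtain ⟨hOU, hOk, -⟩ := hO
  obtain ⟨-, -, hPmax⟩ := hP
  choose z hz hSz using hS
  let A : Fin l → Finset M := fun i => O ∩ Upart i
  let B : Fin l → Finset M := fun i => runPrefix (z i) (A i).card
  have hAk : ∀ i, (A i).card ≤ k := fun i => hOk ▸ Finset.card_le_card Finset.inter_subset_left
  have hOA : O = Finset.univ.biUnion A := by
    rw [← Finset.inter_biUnion, ← hU, Finset.inter_eq_left.2 hOU]
  have hAdisj : ((Finset.univ : Finset (Fin l)) : Set (Fin l)).PairwiseDisjoint A :=
    fun i _ j _ hij => (hdisj i j hij).mono Finset.inter_subset_right Finset.inter_subset_right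
  have hBU : ∀ i, B i ⊆ Upart i := fun i => Finset.image_subset_iff.2 fun j _ => (hz i).2.1 j
  have hBdisj : ((Finset.univ : Finset (Fin l)) : Set (Fin l)).PairwiseDisjoint B :=
    fun i _ j _ hij => (hdisj i j hij).mono (hBU i) (hBU j)
  have hBS : Finset.univ.biUnion B ⊆ Finset.univ.biUnion S :=
    Finset.biUnion_mono fun i _ =>
      hSz i ▸ Finset.image_subset_image (Finset.filter_subset _ _)
  have hBk : (Finset.univ.biUnion B).card = k := by
    rw [Finset.card_biUnion hBdisj, ← hOk]
    conv_rhs => rw [hOA, Finset.card_biUnion hAdisj]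
    exact Finset.sum_congr rfl fun i _ => card_runPrefix (hz i).1 (hAk i)
  have hQ : lam * Qsum q O = ∑ i, lam * Qsum q (A i) := by
    conv_lhs => rw [hOA, Qsum, Finset.sum_biUnion hAdisj, Finset.mul_sum]
    rfl
  have key : lam * Qsum q O ≤ Fobj q lam P := by
    rw [hQ]
    calc ∑ i, lam * Qsum q (A i) ≤ ∑ i, Fobj q lam (B i) :=
          Finset.sum_le_sum fun i _ => (hz i).mul_Qsum_le_Fobj_runPrefix hlam0.le hlam1.le
            Finset.inter_subset_right (hAk i)
      _ ≤ Fobj q lam (Finset.univ.biUnion B) :=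
          sum_Fobj_le_Fobj_biUnion q hlam1.le _ B hBdisj
      _ ≤ Fobj q lam P := hPmax _ hBS hBk
  linarith [Fobj_nonneg hq hlam0.le hlam1.le P]
end
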